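/- Let C : ℤ → [0,∞) satisfy: (i) C is even and C(z) = 0 iff z = 0; (ii) C(z) ≤ C(w) whenever z ⪯ w. Then the following are equivalent: (a) the sublinearity condition (iii') holds, i.e. C(x)/x ≤ C(y)/y for all integers 1 ≤ y ≤ x; (b) for every positive integer N there exists a monotone norm ∥·∥ on ℝ^N satisfying the compatibility equation for C (with m = 1 and the single block {1, …, N}). -/

import Mathlib

/-- `f` is a norm on the real vector space `E`. -/
def IsNorm {E : Type*} [AddCommGroup E] [Module ℝ E] (f : E → ℝ) : Prop :=
  (∀ x, 0 ≤ f x) ∧ (∀ x, f x = 0 ↔ x = 0) ∧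
    (∀ x y, f (x + y) ≤ f x + f y) ∧ ∀ (c : ℝ) (x : E), f (c • x) = |c| * f x

/-- The partial order `x ⪯ y` on real vectors. -/
def PreOrd {ι : Type*} (x y : ι → ℝ) : Prop :=
  ∀ j, |x j| ≤ |y j| ∧ 0 ≤ x j * y j

/-- The single-material (`m = 1`) compatibility equation between a cost `C : ℤ → ℝ`
and a norm `nrm` on `ℝ^N`: for every `θ ∈ ℤ` with `|θ| ≤ N` and every subset
`K ⊆ {1, …, N}` with `#K = |θ|`, one has `C θ = ∥sign(θ) ∑_{j ∈ K} e_j∥`. -/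
def CompatEq1 (N : ℕ) (C : ℤ → ℝ) (nrm : (Fin N → ℝ) → ℝ) : Prop :=
  ∀ θ : ℤ, θ.natAbs ≤ N →
    ∀ K : Finset (Fin N), K.card = θ.natAbs →
      C θ = nrm fun j => (θ.sign : ℝ) * (if j ∈ K then 1 else 0)

/-!
Sublinearity comes from leaving one index out: the vectors `∑ i ∈ S \ {j}, e_i`, `j ∈ S`, add up to
`(#S - 1) • ∑ i ∈ S, e_i`, so a norm that takes the value `C k` at every sum of `k` basis vectors
satisfies `k * C (k + 1) ≤ (k + 1) * C k`. Conversely,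
`‖x‖ = max_S (C #S / #S) * ∑ j ∈ S, |x j|` is a monotone norm. At `∑ i ∈ K, e_i` the term of `S` is
`(C #S / #S) * m` with `m = #(S ∩ K)`; it is at most `C m` by sublinearity and hence at most `C #K`,
with equality for `S = K`. Both arguments stay within one dimension `N`, and there they
characterise sublinearity on `{1, …, N}`.
-/

section LeaveOneOut

variable {ι : Type*} {f : (ι → ℝ) → ℝ}

theorem sum_indicator_erase [DecidableEq ι] (S : Finset ι) :
    ∑ i ∈ S, (S.erase i : Set ι).indicator (1 : ι → ℝ) =
      ((S.card : ℝ) - 1) • (S : Set ι).indicator 1 := by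
  ext j
  by_cases hj : j ∈ S
  · simp [Set.indicator_apply, hj, Finset.sum_ite, Finset.filter_ne,
      Nat.cast_pred (Finset.card_pos.2 ⟨j, hj⟩)]
  · simp [hj]

theorem card_sub_one_mul_le_sum_indicator_erase [DecidableEq ι]
    (hadd : ∀ x y, f (x + y) ≤ f x + f y) (hsmul : ∀ c : ℝ, 0 ≤ c → ∀ x, f (c • x) = c * f x)
    {S : Finset ι} (hS : S.Nonempty) :
    ((S.card : ℝ) - 1) * f ((S : Set ι).indicator 1) ≤
      ∑ i ∈ S, f ((S.erase i : Set ι).indicator 1) := by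
  have hcard : (0 : ℝ) ≤ S.card - 1 := sub_nonneg.2 (by exact_mod_cast hS.card_pos)
  have hf0 : f 0 = 0 := by simpa using hsmul 0 le_rfl 0
  rw [← hsmul _ hcard, ← sum_indicator_erase]
  exact Finset.le_sum_of_subadditive f hf0.le hadd S _

theorem antitoneOn_div_of_apply_indicator [Fintype ι]
    (hadd : ∀ x y, f (x + y) ≤ f x + f y) (hsmul : ∀ c : ℝ, 0 ≤ c → ∀ x, f (c • x) = c * f x)
    {c : ℕ → ℝ} (hc : ∀ K : Finset ι, f ((K : Set ι).indicator 1) = c K.card) :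
    AntitoneOn (fun k : ℕ => c k / k) (Set.Icc 1 (Fintype.card ι)) := by
  classical
  refine antitoneOn_of_add_one_le Set.ordConnected_Icc fun k _ hk hk' => ?_
  obtain ⟨S, -, hS⟩ := Finset.exists_subset_card_eq (s := (Finset.univ : Finset ι)) hk'.2
  have hSne : S.Nonempty := Finset.card_pos.1 (by lia)
  have herase : ∀ i ∈ S, f ((S.erase i : Set ι).indicator 1) = c k := fun i hi => by
    rw [hc, Finset.card_erase_of_mem hi, hS, Nat.add_sub_cancel]
  have hstep : (k : ℝ) * c (k + 1) ≤ (k + 1) * c k := by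
    have hle := card_sub_one_mul_le_sum_indicator_erase hadd hsmul hSne
    rw [hc, Finset.sum_congr rfl herase] at hle
    simpa [hS] using hle
  have hkpos : (0 : ℝ) < k := by exact_mod_cast hk.1
  rw [Nat.cast_add_one, div_le_div_iff₀ (by positivity) hkpos]
  linarith

end LeaveOneOut

section WeightedMaxNorm

variable {ι : Type*} {w : Finset ι → ℝ}

/-- The maximum over all `S` of `w S` times the `ℓ¹` norm of `x` restricted to `S`; the norm
compatible with `C` has weights `C #S / #S`. For infinite `ι` the supremum may be unbounded and
then takes the junk value `0`. -/
noncomputable def weightedMaxNorm (w : Finset ι → ℝ) (x : ι → ℝ) : ℝ :=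
  ⨆ S, w S * ∑ j ∈ S, |x j|

theorem weightedMaxNorm_smul (w : Finset ι → ℝ) (c : ℝ) (x : ι → ℝ) :
    weightedMaxNorm w (c • x) = |c| * weightedMaxNorm w x := by
  simp only [weightedMaxNorm, Real.mul_iSup_of_nonneg (abs_nonneg c), Pi.smul_apply, smul_eq_mul,
    abs_mul, ← Finset.mul_sum, mul_left_comm]

section Finite

variable [Finite ι]

theorem le_weightedMaxNorm (w : Finset ι → ℝ) (x : ι → ℝ) (S : Finset ι) :
    w S * ∑ j ∈ S, |x j| ≤ weightedMaxNorm w x :=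
  Finite.le_ciSup (fun S => w S * ∑ j ∈ S, |x j|) S

theorem weightedMaxNorm_mono (hw : ∀ S, 0 ≤ w S) {x y : ι → ℝ} (hxy : ∀ j, |x j| ≤ |y j|) :
    weightedMaxNorm w x ≤ weightedMaxNorm w y :=
  Finite.ciSup_mono fun S =>
    mul_le_mul_of_nonneg_left (Finset.sum_le_sum fun j _ => hxy j) (hw S)

theorem weightedMaxNorm_add_le (hw : ∀ S, 0 ≤ w S) (x y : ι → ℝ) :
    weightedMaxNorm w (x + y) ≤ weightedMaxNorm w x + weightedMaxNorm w y :=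
  ciSup_le fun S => calc
    w S * ∑ j ∈ S, |x j + y j| ≤ w S * ∑ j ∈ S, (|x j| + |y j|) :=
      mul_le_mul_of_nonneg_left (Finset.sum_le_sum fun j _ => abs_add_le _ _) (hw S)
    _ = w S * ∑ j ∈ S, |x j| + w S * ∑ j ∈ S, |y j| := by rw [Finset.sum_add_distrib, mul_add]
    _ ≤ weightedMaxNorm w x + weightedMaxNorm w y :=
      add_le_add (le_weightedMaxNorm w x S) (le_weightedMaxNorm w y S)

theorem weightedMaxNorm_nonneg (w : Finset ι → ℝ) (x : ι → ℝ) : 0 ≤ weightedMaxNorm w x := by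
  simpa using le_weightedMaxNorm w x ∅

theorem weightedMaxNorm_pos {x : ι → ℝ} {S : Finset ι} {i : ι} (hS : 0 < w S) (hi : i ∈ S)
    (hx : x i ≠ 0) : 0 < weightedMaxNorm w x :=
  have hsum : 0 < ∑ j ∈ S, |x j| :=
    Finset.sum_pos' (fun j _ => abs_nonneg (x j)) ⟨i, hi, abs_pos.2 hx⟩
  (mul_pos hS hsum).trans_le (le_weightedMaxNorm w x S)

theorem isNorm_weightedMaxNorm (hw : ∀ S, 0 ≤ w S) (hpos : ∀ i, ∃ S, i ∈ S ∧ 0 < w S) :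
    IsNorm (weightedMaxNorm w) := by
  refine ⟨weightedMaxNorm_nonneg w, fun x => ⟨fun hx => ?_, ?_⟩, weightedMaxNorm_add_le hw,
    weightedMaxNorm_smul w⟩
  · by_contra hne
    obtain ⟨i, hi⟩ := Function.ne_iff.1 hne
    obtain ⟨S, hiS, hS⟩ := hpos i
    exact (weightedMaxNorm_pos hS hiS hi).ne' hx
  · rintro rfl
    simp [weightedMaxNorm]

theorem isNorm_weightedMaxNorm_div_card {c : ℕ → ℝ} (hc : ∀ k, 0 ≤ c k) (h1 : 0 < c 1) :
    IsNorm (weightedMaxNorm fun S : Finset ι => c S.card / S.card) :=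
  isNorm_weightedMaxNorm (fun _ => div_nonneg (hc _) (Nat.cast_nonneg _))
    fun i => ⟨{i}, Finset.mem_singleton_self i, by simpa using h1⟩

end Finite

theorem div_mul_le_of_antitoneOn_div {c : ℕ → ℝ} {n s m : ℕ} (h0 : 0 ≤ c 0)
    (hanti : AntitoneOn (fun k : ℕ => c k / k) (Set.Icc 1 n)) (hms : m ≤ s) (hsn : s ≤ n) :
    c s / s * m ≤ c m := by
  rcases m.eq_zero_or_pos with rfl | hm
  · simpa using h0
  · have hdiv : c s / s ≤ c m / m := hanti ⟨hm, hms.trans hsn⟩ ⟨hm.trans_le hms, hsn⟩ hms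
    exact (le_div_iff₀ (by exact_mod_cast hm)).1 hdiv

theorem weightedMaxNorm_indicator [Fintype ι] {c : ℕ → ℝ} (h0 : c 0 = 0) (hmono : Monotone c)
    (hanti : AntitoneOn (fun k : ℕ => c k / k) (Set.Icc 1 (Fintype.card ι))) (K : Finset ι) :
    weightedMaxNorm (fun S => c S.card / S.card) ((K : Set ι).indicator 1) = c K.card := by
  classical
  have hsum (S : Finset ι) : ∑ j ∈ S, |(K : Set ι).indicator (1 : ι → ℝ) j| = (S ∩ K).card := by
    simp [Set.indicator_apply, apply_ite abs]
  apply le_antisymm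
  · refine ciSup_le fun S => ?_
    rw [hsum]
    calc c S.card / S.card * (S ∩ K).card ≤ c (S ∩ K).card :=
          div_mul_le_of_antitoneOn_div h0.ge hanti (Finset.card_le_card Finset.inter_subset_left)
            S.card_le_univ
      _ ≤ c K.card := hmono (Finset.card_le_card Finset.inter_subset_right)
  · have hK := le_weightedMaxNorm (fun S => c S.card / S.card) ((K : Set ι).indicator 1) K
    have hcancel : c K.card / K.card * K.card = c K.card :=
      div_mul_cancel_of_imp fun h => by rw [Nat.cast_eq_zero.1 h, h0]
    rwa [hsum, Finset.inter_self, hcancel] at hK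

end WeightedMaxNorm

section Compatibility

variable {C : ℤ → ℝ} {N : ℕ}

theorem apply_sign_smul_indicator {ι : Type*} {f : (ι → ℝ) → ℝ}
    (hsmul : ∀ (c : ℝ) x, f (c • x) = |c| * f x) {θ : ℤ} {K : Finset ι} (hK : K.card = θ.natAbs) :
    f ((θ.sign : ℝ) • (K : Set ι).indicator 1) = f ((K : Set ι).indicator 1) := by
  rcases eq_or_ne θ 0 with rfl | hθ
  · rw [Finset.card_eq_zero.1 hK, Finset.coe_empty, Set.indicator_empty', smul_zero]
  · have habs : |(θ.sign : ℝ)| = 1 := by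
      rw [← Int.cast_abs, Int.abs_sign_of_ne_zero hθ, Int.cast_one]
    rw [hsmul, habs, one_mul]

theorem compatEq1_iff_apply_indicator (heven : C.Even) {nrm : (Fin N → ℝ) → ℝ}
    (hsmul : ∀ (c : ℝ) x, nrm (c • x) = |c| * nrm x) :
    CompatEq1 N C nrm ↔
      ∀ K : Finset (Fin N), nrm ((K : Set (Fin N)).indicator 1) = C K.card := by
  have hvec (θ : ℤ) (K : Finset (Fin N)) :
      (fun j => (θ.sign : ℝ) * if j ∈ K then 1 else 0) =
        (θ.sign : ℝ) • (K : Set (Fin N)).indicator 1 := by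
    ext j
    simp [Set.indicator_apply]
  simp only [CompatEq1, hvec]
  constructor
  · intro h K
    rw [h K.card (by simpa using K.card_le_univ) K rfl, apply_sign_smul_indicator hsmul rfl]
  · intro h θ _ K hK
    have hCθ : C θ.natAbs = C θ := by
      rcases θ.natAbs_eq with hθ | hθ
      · rw [← hθ]
      · rw [← heven, ← hθ]
    rw [apply_sign_smul_indicator hsmul hK, h, hK, hCθ]

theorem antitoneOn_div_iff_exists_compatible_monotone_norm (heven : C.Even) (h0 : C 0 = 0)
    (h1 : 0 < C 1) (hmono : Monotone fun k : ℕ => C k) :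
    AntitoneOn (fun k : ℕ => C k / k) (Set.Icc 1 N) ↔
      ∃ nrm : (Fin N → ℝ) → ℝ,
        IsNorm nrm ∧ (∀ x y, PreOrd x y → nrm x ≤ nrm y) ∧ CompatEq1 N C nrm := by
  constructor
  · intro hanti
    have hnonneg (k : ℕ) : 0 ≤ C k := h0.ge.trans (hmono k.zero_le)
    refine ⟨weightedMaxNorm fun S => C S.card / S.card, isNorm_weightedMaxNorm_div_card hnonneg h1,
      fun x y hxy => weightedMaxNorm_mono (fun _ => div_nonneg (hnonneg _) (Nat.cast_nonneg _))
        fun j => (hxy j).1, ?_⟩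
    rw [compatEq1_iff_apply_indicator heven (weightedMaxNorm_smul _)]
    exact weightedMaxNorm_indicator h0 hmono (by rwa [Fintype.card_fin])
  · rintro ⟨nrm, ⟨-, -, hadd, hsmul⟩, -, hcompat⟩
    rw [compatEq1_iff_apply_indicator heven hsmul] at hcompat
    have hsmul_nonneg (c : ℝ) (hc : 0 ≤ c) (x : Fin N → ℝ) : nrm (c • x) = c * nrm x := by
      rw [hsmul, abs_of_nonneg hc]
    simpa using antitoneOn_div_of_apply_indicator hadd hsmul_nonneg hcompat

theorem forall_div_le_div_iff_forall_antitoneOn (C : ℤ → ℝ) :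
    (∀ x y : ℤ, 1 ≤ y → y ≤ x → C x / (x : ℝ) ≤ C y / (y : ℝ)) ↔
      ∀ N : ℕ, 0 < N → AntitoneOn (fun k : ℕ => C k / k) (Set.Icc 1 N) := by
  constructor
  · intro h N _ k hk n _ hkn
    simpa using h n k (by exact_mod_cast hk.1) (by exact_mod_cast hkn)
  · intro h x y hy hyx
    lift y to ℕ using by lia
    lift x to ℕ using by lia
    simpa using h x (by lia) ⟨by lia, by lia⟩ ⟨by lia, le_rfl⟩ (by exact_mod_cast hyx)

end Compatibility

/-- Let `C : ℤ → [0,∞)` satisfy (i) even and vanishing exactly at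
`0`, and (ii) monotone with respect to `⪯`. Then the sublinearity condition (iii'),
i.e. `C(x)/x ≤ C(y)/y` for all integers `1 ≤ y ≤ x`, holds if and only if for every
positive integer `N` there exists a monotone norm on `ℝ^N` satisfying the
compatibility equation for `C`. -/
theorem sublinear_iff_exists_compatible_monotone_norm
    (C : ℤ → ℝ)
    (hC0 : ∀ z, 0 ≤ C z)
    (heven : ∀ z, C (-z) = C z)
    (hzero : ∀ z, C z = 0 ↔ z = 0)
    (hmono : ∀ z w : ℤ, |z| ≤ |w| → 0 ≤ z * w → C z ≤ C w) :
    (∀ x y : ℤ, 1 ≤ y → y ≤ x → C x / (x : ℝ) ≤ C y / (y : ℝ)) ↔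
    (∀ N : ℕ, 0 < N → ∃ nrm : (Fin N → ℝ) → ℝ,
      IsNorm nrm ∧ (∀ x y, PreOrd x y → nrm x ≤ nrm y) ∧ CompatEq1 N C nrm) := by
  have hC1 : 0 < C 1 := (hC0 1).lt_of_ne' fun h => one_ne_zero ((hzero 1).1 h)
  have hmono_nat : Monotone fun k : ℕ => C k := fun k n hkn =>
    hmono k n (by simpa using hkn) (by positivity)
  rw [forall_div_le_div_iff_forall_antitoneOn]
  exact forall₂_congr fun N _ =>
    antitoneOn_div_iff_exists_compatible_monotone_norm heven ((hzero 0).2 rfl) hC1 hmono_nat
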